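/- Let $m \ge 1$. Define the semiseparable matrix $M^{-1}$ with entries $[M^{-1}]_{\ell,n} = \frac{\sqrt{(2\ell+2m+1)(2n+2m+1)}}{2m}\sqrt{\frac{(\ell+2m)!}{\ell!}\cdot\frac{n!}{(n+2m)!}}$ for $\ell \le n$ with $\ell+n$ even, $[M^{-1}]_{\ell,n} = \frac{\sqrt{(2\ell+2m+1)(2n+2m+1)}}{2m}\sqrt{\frac{\ell!}{(\ell+2m)!}\cdot\frac{(n+2m)!}{n!}}$ for $\ell > n$ with $\ell+n$ even, and $0$ when $\ell+n$ is odd. Then $[M^{-1}]_{\ell,n} = \int_{-1}^{1} \frac{\tilde P_{\ell+m}^m(x)\,\tilde P_{n+m}^m(x)}{1-x^2}\,dx$ for all $\ell, n \ge 0$. -/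

import Mathlib

open scoped Nat

/-- Associated Legendre function (Condon–Shortley phase) via Rodrigues' formula. -/
noncomputable def assocLegendre (ℓ m : ℕ) (x : ℝ) : ℝ :=
  (-1 : ℝ) ^ m * (1 - x ^ 2) ^ ((m : ℝ) / 2) *
    iteratedDeriv m
      (fun y : ℝ => (1 / (2 ^ ℓ * (ℓ ! : ℝ))) *
        iteratedDeriv ℓ (fun t : ℝ => (t ^ 2 - 1) ^ ℓ) y) x

/-- Normalized associated Legendre function, orthonormal in `L²([-1,1],dx)`. -/
noncomputable def tildeP (ℓ m : ℕ) (x : ℝ) : ℝ :=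
  (-1 : ℝ) ^ m * Real.sqrt (((ℓ : ℝ) + 1 / 2) * ((ℓ - m)! : ℝ) / ((ℓ + m)! : ℝ)) *
    assocLegendre ℓ m x

/-- The semiseparable entries of the inverse multiplication operator `M⁻¹`. -/
noncomputable def Minv (m ℓ n : ℕ) : ℝ :=
  if Even (ℓ + n) then
    if ℓ ≤ n then
      Real.sqrt ((2 * (ℓ : ℝ) + 2 * m + 1) * (2 * (n : ℝ) + 2 * m + 1)) / (2 * m) *
        Real.sqrt ((((ℓ + 2 * m)! : ℝ) / (ℓ ! : ℝ)) * ((n ! : ℝ) / ((n + 2 * m)! : ℝ)))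
    else
      Real.sqrt ((2 * (ℓ : ℝ) + 2 * m + 1) * (2 * (n : ℝ) + 2 * m + 1)) / (2 * m) *
        Real.sqrt (((ℓ ! : ℝ) / ((ℓ + 2 * m)! : ℝ)) * (((n + 2 * m)! : ℝ) / (n ! : ℝ)))
  else 0

open Polynomial in
theorem iterate_derivative_eval_eq_factorial_mul_taylor_coeff (p : ℝ[X]) (k : ℕ) (a : ℝ) :
    (derivative^[k] p).eval a = k ! * (taylor a p).coeff k := by
  rw [taylor_coeff, ← factorial_smul_hasseDeriv]
  simp

open Polynomial in
theorem iterate_derivative_X_sub_C_pow_mul_eval_of_lt (g : ℝ[X]) (a : ℝ) {k r : ℕ} (h : k < r) :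
    (derivative^[k] ((X - C a) ^ r * g)).eval a = 0 := by
  rw [iterate_derivative_eval_eq_factorial_mul_taylor_coeff, taylor_mul, taylor_pow]
  simp [coeff_X_pow_mul', h]

open Polynomial in
theorem iterate_derivative_X_sub_C_pow_mul_eval (g : ℝ[X]) (a : ℝ) (r j : ℕ) :
    (derivative^[r + j] ((X - C a) ^ r * g)).eval a = (r + j)! * (taylor a g).coeff j := by
  rw [iterate_derivative_eval_eq_factorial_mul_taylor_coeff, taylor_mul, taylor_pow]
  simp [coeff_X_pow_mul']

open Polynomial in
theorem X_sq_sub_one_eq_mul {a : ℝ} (ha : a ^ 2 = 1) :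
    (X ^ 2 - 1 : ℝ[X]) = (X - C a) * (X + C a) := by
  have h : (C a : ℝ[X]) ^ 2 = 1 := by rw [← C_pow, ha, C_1]
  linear_combination h

open Polynomial in
theorem iterate_derivative_X_sq_sub_one_pow_mul_eval_of_lt {a : ℝ} (ha : a ^ 2 = 1) (g : ℝ[X])
    {k r : ℕ} (h : k < r) : (derivative^[k] ((X ^ 2 - 1) ^ r * g)).eval a = 0 := by
  rw [X_sq_sub_one_eq_mul ha, mul_pow, mul_assoc,
    iterate_derivative_X_sub_C_pow_mul_eval_of_lt _ _ h]

open Polynomial in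
theorem iterate_derivative_X_sq_sub_one_pow_mul_eval {a : ℝ} (ha : a ^ 2 = 1) (g : ℝ[X]) (r : ℕ) :
    (derivative^[r] ((X ^ 2 - 1) ^ r * g)).eval a = r ! * (2 * a) ^ r * g.eval a := by
  rw [X_sq_sub_one_eq_mul ha, mul_pow, mul_assoc]
  refine (iterate_derivative_X_sub_C_pow_mul_eval _ a r 0).trans ?_
  rw [taylor_coeff_zero]
  simp [two_mul, mul_assoc]

open Polynomial in
theorem iterate_derivative_X_sq_sub_one_pow_eval {a : ℝ} (ha : a ^ 2 = 1) (N j : ℕ) :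
    (derivative^[N + j] ((X ^ 2 - 1 : ℝ[X]) ^ N)).eval a =
      (N + j)! * ((2 * a) ^ (N - j) * N.choose j) := by
  rw [X_sq_sub_one_eq_mul ha, mul_pow, iterate_derivative_X_sub_C_pow_mul_eval, taylor_pow]
  have h : taylor a (X + C a) = X + C (2 * a) := by
    rw [map_add, taylor_X, taylor_C, add_assoc, ← C_add, two_mul]
  rw [h, coeff_X_add_C_pow]

open Polynomial in
/-- Iterated integration by parts, in differential form. -/
theorem derivative_sum_iterate_derivative_mul (f g : ℝ[X]) (K : ℕ) :
    derivative (∑ k ∈ Finset.range K,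
      (-1) ^ k * (derivative^[k] f * derivative^[K - 1 - k] g)) =
      f * derivative^[K] g - (-1) ^ K * (derivative^[K] f * g) := by
  have h := Finset.sum_range_sub'
    (fun k => (-1 : ℝ[X]) ^ k * (derivative^[k] f * derivative^[K - k] g)) K
  simp only [pow_zero, one_mul, Function.iterate_zero, id, Nat.sub_zero, Nat.sub_self] at h
  rw [← h, derivative_sum]
  refine Finset.sum_congr rfl fun k hk => ?_
  have hk : k < K := Finset.mem_range.mp hk
  have e1 : derivative ((-1 : ℝ[X]) ^ k) = 0 := by
    rw [show (-1 : ℝ[X]) = C (-1) by simp, ← C_pow, derivative_C]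
  have e2 : derivative (derivative^[K - 1 - k] g) = derivative^[K - k] g := by
    rw [← Function.iterate_succ_apply' derivative]
    congr 2
    omega
  rw [derivative_mul, derivative_mul, e1, e2, ← Function.iterate_succ_apply' derivative,
    show K - (k + 1) = K - 1 - k by omega, Nat.succ_eq_add_one]
  ring

open Polynomial in
theorem integral_eval_derivative (p : ℝ[X]) (a b : ℝ) :
    ∫ x in a..b, (derivative p).eval x = p.eval b - p.eval a :=
  intervalIntegral.integral_eq_sub_of_hasDerivAt (fun x _ => p.hasDerivAt x)
    ((derivative p).continuous.intervalIntegrable _ _)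

open Polynomial in
theorem integral_X_sq_sub_one_pow_mul_iterate_derivative (r N : ℕ) (g : ℝ[X])
    (hg : 2 * r + g.natDegree < N + (r + 1)) :
    ∫ x in (-1 : ℝ)..1,
      ((X ^ 2 - 1) ^ r * g * derivative^[N + (r + 1)] ((X ^ 2 - 1 : ℝ[X]) ^ N)).eval x =
      (-1) ^ r * (r ! * N !) * (2 ^ (r + N) * g.eval 1 - (-2) ^ (r + N) * g.eval (-1)) := by
  have hz : derivative^[N + (r + 1)] ((X ^ 2 - 1) ^ r * g) = 0 := by
    refine iterate_derivative_eq_zero (lt_of_le_of_lt natDegree_mul_le ?_)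
    have h1 : ((X ^ 2 - 1 : ℝ[X]) ^ r).natDegree ≤ r * 2 := by
      refine natDegree_pow_le_of_le r ?_
      compute_degree
    omega
  have key := derivative_sum_iterate_derivative_mul ((X ^ 2 - 1) ^ r * g)
    ((X ^ 2 - 1 : ℝ[X]) ^ N) (N + (r + 1))
  rw [hz, zero_mul, mul_zero, sub_zero] at key
  have hb : ∀ a : ℝ, a ^ 2 = 1 → eval a (∑ k ∈ Finset.range (N + (r + 1)),
      (-1) ^ k * (derivative^[k] ((X ^ 2 - 1) ^ r * g) *
        derivative^[N + (r + 1) - 1 - k] ((X ^ 2 - 1 : ℝ[X]) ^ N))) =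
      (-1) ^ r * (r ! * N !) * ((2 * a) ^ (r + N) * g.eval a) := by
    intro a ha
    rw [eval_finsetSum, Finset.sum_eq_single r]
    · have h2 := iterate_derivative_X_sq_sub_one_pow_eval ha N 0
      rw [show N + (r + 1) - 1 - r = N + 0 by omega, eval_mul, eval_mul, h2,
        iterate_derivative_X_sq_sub_one_pow_mul_eval ha]
      simp
      ring
    · intro k hk hkr
      have hk : k < N + (r + 1) := Finset.mem_range.mp hk
      rcases lt_or_gt_of_ne hkr with h | h
      · simp [iterate_derivative_X_sq_sub_one_pow_mul_eval_of_lt ha g h]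
      · have h3 := iterate_derivative_X_sq_sub_one_pow_mul_eval_of_lt ha 1
          (show N + (r + 1) - 1 - k < N by omega)
        rw [mul_one] at h3
        rw [eval_mul, eval_mul, h3, mul_zero, mul_zero]
    · intro h
      exact absurd (Finset.mem_range.mpr (by omega)) h
  rw [← key, integral_eval_derivative, hb 1 (by norm_num), hb (-1) (by norm_num)]
  norm_num
  ring

open Polynomial in
theorem iteratedDeriv_eval (p : ℝ[X]) (k : ℕ) :
    iteratedDeriv k (fun x : ℝ => p.eval x) = fun x => (derivative^[k] p).eval x := by
  induction k with
  | zero => simp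
  | succ k ih =>
    rw [iteratedDeriv_succ, ih, Function.iterate_succ_apply']
    ext x
    exact Polynomial.deriv _

open Polynomial in
theorem assocLegendre_eq_eval (L m : ℕ) (x : ℝ) :
    assocLegendre L m x = (-1) ^ m * (1 - x ^ 2) ^ ((m : ℝ) / 2) *
      (1 / (2 ^ L * L !) * (derivative^[L + m] ((X ^ 2 - 1 : ℝ[X]) ^ L)).eval x) := by
  have h : (fun t : ℝ => (t ^ 2 - 1) ^ L) = fun t => ((X ^ 2 - 1 : ℝ[X]) ^ L).eval t := by
    ext t
    simp
  have h2 : (fun y : ℝ => 1 / (2 ^ L * (L ! : ℝ)) *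
      (derivative^[L] ((X ^ 2 - 1 : ℝ[X]) ^ L)).eval y) =
      fun y => (C (1 / (2 ^ L * (L ! : ℝ))) * derivative^[L] ((X ^ 2 - 1 : ℝ[X]) ^ L)).eval y := by
    ext y
    rw [eval_mul, eval_C]
  rw [assocLegendre, h, iteratedDeriv_eval, h2, iteratedDeriv_eval]
  simp only [iterate_derivative_C_mul, eval_mul, eval_C]
  rw [← Function.iterate_add_apply, add_comm m L]

theorem Minv_comm (m ℓ n : ℕ) : Minv m ℓ n = Minv m n ℓ := by
  unfold Minv
  rw [add_comm n ℓ]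
  split_ifs with h h1 h2 h2
  · rw [le_antisymm h1 h2]
  · rw [mul_comm (2 * (ℓ : ℝ) + _ + _), mul_comm ((_ : ℝ) / _) ((n ! : ℝ) / _)]
  · rw [mul_comm (2 * (ℓ : ℝ) + _ + _), mul_comm ((_ : ℝ) / _) ((_ : ℝ) / (n ! : ℝ))]
  · omega
  · rfl

open Polynomial in
theorem tildeP_mul_tildeP_div (r ℓ n : ℕ) {x : ℝ} (hx : x ∈ Set.Ioo (-1 : ℝ) 1) :
    tildeP (ℓ + (r + 1)) (r + 1) x * tildeP (n + (r + 1)) (r + 1) x / (1 - x ^ 2) =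
      (-1) ^ r * (√(((ℓ + (r + 1) : ℕ) + 1 / 2) * ℓ ! / (ℓ + 2 * (r + 1))!) *
        √(((n + (r + 1) : ℕ) + 1 / 2) * n ! / (n + 2 * (r + 1))!)) /
        (2 ^ (ℓ + (r + 1)) * (ℓ + (r + 1))! * (2 ^ (n + (r + 1)) * (n + (r + 1))!)) *
      ((X ^ 2 - 1) ^ r *
        derivative^[ℓ + (r + 1) + (r + 1)] ((X ^ 2 - 1 : ℝ[X]) ^ (ℓ + (r + 1))) *
        derivative^[n + (r + 1) + (r + 1)] ((X ^ 2 - 1 : ℝ[X]) ^ (n + (r + 1)))).eval x := by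
  have hpos : 0 < 1 - x ^ 2 := by nlinarith [hx.1, hx.2]
  have hw : (1 - x ^ 2) ^ (((r + 1 : ℕ) : ℝ) / 2) * (1 - x ^ 2) ^ (((r + 1 : ℕ) : ℝ) / 2) =
      (1 - x ^ 2) * ((-1) ^ r * (x ^ 2 - 1) ^ r) := by
    rw [← Real.rpow_add hpos, add_halves, Real.rpow_natCast, ← mul_pow, pow_succ']
    ring
  have hs : ((-1 : ℝ) ^ (r + 1)) ^ 4 = 1 := by
    rw [← pow_mul, mul_comm, pow_mul]; norm_num
  rw [tildeP, tildeP, assocLegendre_eq_eval, assocLegendre_eq_eval, eval_mul, eval_mul,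
    Nat.add_sub_cancel, Nat.add_sub_cancel, add_assoc ℓ, add_assoc n, ← two_mul]
  simp only [eval_pow, eval_sub, eval_X, eval_one]
  rw [div_eq_iff hpos.ne']
  generalize (1 - x ^ 2) ^ (((r + 1 : ℕ) : ℝ) / 2) = w at hw
  generalize √(((ℓ + (r + 1) : ℕ) + 1 / 2) * ℓ ! / (ℓ + 2 * (r + 1))!) = A
  generalize √(((n + (r + 1) : ℕ) + 1 / 2) * n ! / (n + 2 * (r + 1))!) = B
  generalize eval x (derivative^[ℓ + 2 * (r + 1)] _) = P
  generalize eval x (derivative^[n + 2 * (r + 1)] _) = Q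
  generalize (-1 : ℝ) ^ (r + 1) = s at hs
  generalize 2 ^ (ℓ + (r + 1)) * ((ℓ + (r + 1))! : ℝ) = c
  generalize 2 ^ (n + (r + 1)) * ((n + (r + 1))! : ℝ) = d
  calc _ = s ^ 4 * (w * w) * (A * B * P * Q * (1 / c * (1 / d))) := by ring
    _ = _ := by rw [hs, hw]; ring

open Polynomial in
theorem Minv_entries_eq_integral_of_le (m : ℕ) (hm : 1 ≤ m) (ℓ n : ℕ) (hln : ℓ ≤ n) :
    Minv m ℓ n =
      ∫ x in (-1 : ℝ)..1, tildeP (ℓ + m) m x * tildeP (n + m) m x / (1 - x ^ 2) := by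
  obtain ⟨r, rfl⟩ : ∃ r, m = r + 1 := ⟨m - 1, by omega⟩
  rw [intervalIntegral.integral_congr_Ioo_of_le (by norm_num)
    fun x hx => tildeP_mul_tildeP_div r ℓ n hx, intervalIntegral.integral_const_mul,
    integral_X_sq_sub_one_pow_mul_iterate_derivative,
    iterate_derivative_X_sq_sub_one_pow_eval (by norm_num),
    iterate_derivative_X_sq_sub_one_pow_eval (by norm_num)]
  · have hb : (2 : ℝ) ^ (r + (n + (r + 1))) *
          ((ℓ + (r + 1) + (r + 1))! * ((2 * 1) ^ (ℓ + (r + 1) - (r + 1)) *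
            (ℓ + (r + 1)).choose (r + 1))) -
        (-2) ^ (r + (n + (r + 1))) *
          ((ℓ + (r + 1) + (r + 1))! * ((2 * -1) ^ (ℓ + (r + 1) - (r + 1)) *
            (ℓ + (r + 1)).choose (r + 1))) =
        2 ^ (r + (n + (r + 1)) + ℓ) * ((ℓ + 2 * (r + 1))! *
          ((ℓ + (r + 1))! / (ℓ ! * (r + 1)!))) * (1 + (-1) ^ (ℓ + n)) := by
      have hr : ((-1 : ℝ) ^ r) ^ 2 = 1 := by rw [← pow_mul, mul_comm, pow_mul]; norm_num
      rw [add_assoc ℓ, ← two_mul (r + 1), Nat.add_sub_cancel, ← Nat.choose_symm_add,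
        Nat.cast_add_choose, show (-2 : ℝ) = -1 * 2 by norm_num, show (2 : ℝ) * -1 = -1 * 2 by ring,
        mul_one, mul_pow, mul_pow]
      have hsgn : (-1 : ℝ) ^ (r + (n + (r + 1))) * (-1) ^ ℓ = -(-1) ^ (ℓ + n) := by
        linear_combination -(-1 : ℝ) ^ (ℓ + n) * hr
      generalize ((ℓ + 2 * (r + 1))! : ℝ) = W
      generalize ((ℓ + (r + 1))! / (ℓ ! * (r + 1)!) : ℝ) = V
      linear_combination (-(2 : ℝ) ^ (r + (n + (r + 1))) * 2 ^ ℓ * W * V) * hsgn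
    have hA : ∀ k : ℕ, √(((k + (r + 1) : ℕ) + 1 / 2) * (k ! : ℝ) / (k + 2 * (r + 1))!) =
        √(2 * k + 2 * (r + 1 : ℕ) + 1) * (√(k !) / √((k + 2 * (r + 1))!)) / √2 := by
      intro k
      rw [← Real.sqrt_div (by positivity), ← Real.sqrt_mul (by positivity),
        ← Real.sqrt_div (by positivity)]
      congr 1
      push_cast
      field_simp
    rw [hb, hA, hA, Minv, if_pos hln]
    split_ifs with he
    · rw [he.neg_one_pow, Real.sqrt_mul (by positivity), Real.sqrt_mul (by positivity),
        Real.sqrt_div (by positivity), Real.sqrt_div (by positivity)]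
      have hr : ((-1 : ℝ) ^ r) * (-1) ^ r = 1 := by rw [← mul_pow]; norm_num
      have h2 : √(2 : ℝ) ^ 2 = 2 := Real.sq_sqrt (by norm_num)
      have ha : √(ℓ ! : ℝ) ^ 2 = ℓ ! := Real.sq_sqrt (by positivity)
      have hc : √((ℓ + 2 * (r + 1))! : ℝ) ^ 2 = (ℓ + 2 * (r + 1))! := Real.sq_sqrt (by positivity)
      have ha0 : 0 < √(ℓ ! : ℝ) := by positivity
      have hc0 : 0 < √((ℓ + 2 * (r + 1))! : ℝ) := by positivity
      have hd0 : 0 < √((n + 2 * (r + 1))! : ℝ) := by positivity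
      have h20 : 0 < √(2 : ℝ) := by positivity
      rw [Nat.factorial_succ r, ← ha, ← hc, Real.sqrt_sq ha0.le, Real.sqrt_sq hc0.le]
      generalize √(2 : ℝ) = t at *
      generalize √(ℓ ! : ℝ) = a at *
      generalize √((ℓ + 2 * (r + 1))! : ℝ) = c at *
      generalize √((n + 2 * (r + 1))! : ℝ) = d at *
      generalize √(n ! : ℝ) = b at *
      generalize √(2 * (ℓ : ℝ) + 2 * (r + 1 : ℕ) + 1) = p at *
      generalize √(2 * (n : ℝ) + 2 * (r + 1 : ℕ) + 1) = q at *
      have hL : ((ℓ + (r + 1))! : ℝ) ≠ 0 := by positivity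
      have hN : ((n + (r + 1))! : ℝ) ≠ 0 := by positivity
      have hR : (r ! : ℝ) ≠ 0 := by positivity
      generalize ((ℓ + (r + 1))! : ℝ) = L at *
      generalize ((n + (r + 1))! : ℝ) = N at *
      push_cast
      generalize (r ! : ℝ) = R at *
      calc p * q / (2 * (r + 1 : ℝ)) * (c / a * (b / d)) =
          1 * (p * q / (2 * (r + 1 : ℝ)) * (c / a * (b / d))) := by rw [one_mul]
        _ = ((-1 : ℝ) ^ r * (-1) ^ r) * ((p * (a / c) * (q * (b / d))) / 2 /
            (2 ^ (ℓ + (r + 1)) * L * (2 ^ (n + (r + 1)) * N)) * (R * N *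
              (2 ^ (r + (n + (r + 1)) + ℓ) * (c ^ 2 * (L / (a ^ 2 * ((r + 1) * R)))) *
                (1 + 1)))) := by
          rw [hr]
          congr 1
          field_simp
          ring
        _ = _ := by
          field_simp
          rw [h2]
    · rw [(Nat.not_even_iff_odd.mp he).neg_one_pow]
      simp
  · refine lt_of_le_of_lt (Nat.add_le_add_left (natDegree_iterate_derivative _ _) _) ?_
    have h1 : ((X ^ 2 - 1 : ℝ[X]) ^ (ℓ + (r + 1))).natDegree ≤ (ℓ + (r + 1)) * 2 := by
      refine natDegree_pow_le_of_le _ ?_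
      compute_degree
    omega

/-- the semiseparable matrix `M⁻¹` has entries given by the integrals
`∫ P̃_{ℓ+m}^m P̃_{n+m}^m / (1-x²) dx`. -/
theorem Minv_entries_eq_integral (m : ℕ) (hm : 1 ≤ m) (ℓ n : ℕ) :
    Minv m ℓ n =
      ∫ x in (-1 : ℝ)..1, tildeP (ℓ + m) m x * tildeP (n + m) m x / (1 - x ^ 2) := by
  rcases le_total ℓ n with h | h
  · exact Minv_entries_eq_integral_of_le m hm ℓ n h
  · rw [Minv_comm, Minv_entries_eq_integral_of_le m hm n ℓ h]
    simp only [mul_comm]
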